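/- Let k be an infinite field. Let g ∈ k[x₁, x₂, x₃] have zero constant term and zero linear part (all homogeneous components of g of degree < 2 vanish), let g′ ∈ k[x₁, x₂, x₃] satisfy g′(0, 0, 0) ≠ 0, and set f = g + x₄·g′ ∈ k[x₁, x₂, x₃, x₄]. If (a₁, a₂, a₃, a₄) ∈ k⁴ is such that f(a₁ t, a₂ t, a₃ t, a₄ t) = 0 for all t ∈ k, then a₄ = 0, and consequently g(a₁ t, a₂ t, a₃ t) = 0 for all t ∈ k, i.e., the line { t·(a₁, a₂, a₃) : t ∈ k } lies in the surface Z(g). -/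

import Mathlib

/-!
Restricted to the line `t ↦ t • a`, a polynomial `f` becomes `∑ d, f_d(a) t ^ d`, where `f_d` is its
homogeneous component of degree `d`. Over an infinite domain, a line contained in `Z(f)` therefore
lies in every `Z(f_d)`. For `f = g + x_j g'` with `g` having no linear part, the linear part of `f`
is `g'(0) x_j`, so `g'(0) ≠ 0` forces `a_j = 0`.
-/

section LineRestriction

open MvPolynomial

variable {R σ : Type*} [CommSemiring R]

/-- The restriction of a polynomial to the line through the origin spanned by `a`, as a univariate
polynomial in the parameter of `t ↦ t • a`. The vector `a` may be zero. -/
noncomputable def lineRestriction (a : σ → R) : MvPolynomial σ R →ₐ[R] Polynomial R :=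
  aeval fun i => Polynomial.C (a i) * Polynomial.X

lemma eval_lineRestriction (a : σ → R) (p : MvPolynomial σ R) (t : R) :
    (lineRestriction a p).eval t = eval (t • a) p := by
  induction p using MvPolynomial.induction_on with
  | C c => simp [lineRestriction]
  | add p q hp hq => simp only [map_add, Polynomial.eval_add, hp, hq]
  | mul_X p i hp =>
    rw [map_mul, map_mul, Polynomial.eval_mul, hp]
    simp [lineRestriction, mul_comm t]

lemma lineRestriction_monomial (a : σ → R) (m : σ →₀ ℕ) (c : R) :
    lineRestriction a (monomial m c) =
      Polynomial.monomial m.degree (eval a (monomial m c)) := by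
  simp [lineRestriction, aeval_monomial, eval_monomial, mul_pow, Finsupp.prod,
    Finset.prod_mul_distrib, Finset.prod_pow_eq_pow_sum, Finsupp.degree_apply,
    ← Polynomial.C_mul_X_pow_eq_monomial, mul_assoc]

lemma coeff_lineRestriction (a : σ → R) (p : MvPolynomial σ R) (d : ℕ) :
    (lineRestriction a p).coeff d = eval a (homogeneousComponent d p) := by
  induction p using MvPolynomial.induction_on' with
  | monomial m c =>
    have hm : (monomial m c).IsHomogeneous m.degree := isHomogeneous_monomial c rfl
    rw [lineRestriction_monomial, Polynomial.coeff_monomial, homogeneousComponent_of_mem hm]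
    simp only [eq_comm (a := d), apply_ite (eval a), map_zero]
  | add p q hp hq => simp only [map_add, Polynomial.coeff_add, hp, hq]

end LineRestriction

section HomogeneousComponent

open MvPolynomial

lemma homogeneousComponent_succ_X_mul {R σ : Type*} [CommSemiring R] (n : ℕ) (j : σ)
    (p : MvPolynomial σ R) :
    homogeneousComponent (n + 1) (X j * p) = X j * homogeneousComponent n p := by
  induction p using MvPolynomial.induction_on' with
  | monomial m c =>
    have hm : (monomial m c).IsHomogeneous m.degree := isHomogeneous_monomial c rfl
    have hXm : (X j * monomial m c).IsHomogeneous (m.degree + 1) :=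
      add_comm 1 m.degree ▸ (isHomogeneous_X R j).mul hm
    simp only [homogeneousComponent_of_mem hm, homogeneousComponent_of_mem hXm, mul_ite, mul_zero,
      Nat.add_right_cancel_iff]
  | add p q hp hq => simp only [mul_add, map_add, hp, hq]

variable {R σ : Type*} [CommRing R] [IsDomain R] [Infinite R]

lemma eval_homogeneousComponent_eq_zero_of_forall_eval_smul_eq_zero {f : MvPolynomial σ R}
    {a : σ → R} (hline : ∀ t : R, eval (t • a) f = 0) (d : ℕ) :
    eval a (homogeneousComponent d f) = 0 := by
  have hf : lineRestriction a f = 0 :=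
    Polynomial.zero_of_eval_zero _ fun t => (eval_lineRestriction a f t).trans (hline t)
  rw [← coeff_lineRestriction, hf, Polynomial.coeff_zero]

theorem line_through_origin_lies_in_hyperplane_general {τ : Type*} {g g' : MvPolynomial σ R}
    (hg1 : homogeneousComponent 1 g = 0) (hg' : eval 0 g' ≠ 0) {ι : σ → τ} {j : τ} {a : τ → R}
    (hline : ∀ t : R, eval (t • a) (rename ι g + X j * rename ι g') = 0) :
    a j = 0 ∧ ∀ t : R, eval (t • (a ∘ ι)) g = 0 := by
  have linear_part : homogeneousComponent 1 (rename ι g + X j * rename ι g') =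
      X j * C (eval 0 g') := by
    rw [map_add, homogeneousComponent_succ_X_mul, ← rename_homogeneousComponent,
      ← rename_homogeneousComponent, hg1, homogeneousComponent_zero, map_zero, zero_add, rename_C,
      eval_zero, constantCoeff_eq]
  have haj : a j = 0 := by
    have h := eval_homogeneousComponent_eq_zero_of_forall_eval_smul_eq_zero hline 1
    rw [linear_part, map_mul, eval_X, eval_C] at h
    exact (mul_eq_zero.mp h).resolve_right hg'
  refine ⟨haj, fun t => ?_⟩
  simpa [haj, eval_rename, Pi.smul_comp] using hline t

end HomogeneousComponent

/-- Over an infinite field, if `g` has zero constant term and zero linear part,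
`g′(0,0,0) ≠ 0`, and the line `{t • a}` lies in `Z(g + x₄·g′)`, then `a₄ = 0` and the line
`{t • (a₁,a₂,a₃)}` lies in `Z(g)`. -/
theorem line_through_origin_lies_in_hyperplane
    (k : Type*) [Field k] [Infinite k]
    (g g' : MvPolynomial (Fin 3) k)
    (hg0 : MvPolynomial.homogeneousComponent 0 g = 0)
    (hg1 : MvPolynomial.homogeneousComponent 1 g = 0)
    (hg' : MvPolynomial.eval (0 : Fin 3 → k) g' ≠ 0)
    (f : MvPolynomial (Fin 4) k)
    (hf : f = MvPolynomial.rename Fin.castSucc g +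
        MvPolynomial.X (Fin.last 3) * MvPolynomial.rename Fin.castSucc g')
    (a : Fin 4 → k)
    (hline : ∀ t : k, MvPolynomial.eval (fun j => t * a j) f = 0) :
    a (Fin.last 3) = 0 ∧
    ∀ t : k, MvPolynomial.eval (fun j : Fin 3 => t * a (Fin.castSucc j)) g = 0 := by
  exact line_through_origin_lies_in_hyperplane_general hg1 hg' fun t => hf ▸ hline t
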